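/- arXiv:2410.15421 — 2 statements merged into one kernel-verified Lean document; each statement's English description precedes it below -/
import Mathlib

section
/- For any warping functions γ₁, γ₂ ∈ Γ₁, the CLR transform of their composition satisfies, for all t ∈ [0,1], ψ_B(γ₁ ∘ γ₂)(t) = ψ_B(γ₁)(γ₂(t)) + ψ_B(γ₂)(t) − ∫₀¹ ψ_B(γ₁)(γ₂(s)) ds. -/
open Set MeasureTheory

/-- The centered log-ratio (CLR) transform `ψ_B`, expressed in terms of the
derivative function `g = γ′` of a warping function:
`ψ_B(γ)(t) = log γ′(t) − ∫₀¹ log γ′(s) ds`. -/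
noncomputable def clr (g : ℝ → ℝ) (t : ℝ) : ℝ :=
  Real.log (g t) - ∫ s in (0:ℝ)..1, Real.log (g s)

/-- The inverse CLR transform `ψ_B⁻¹(h)(t) = (∫₀ᵗ exp h) / (∫₀¹ exp h)`. -/
noncomputable def psiInv (h : ℝ → ℝ) (t : ℝ) : ℝ :=
  (∫ s in (0:ℝ)..t, Real.exp (h s)) / ∫ s in (0:ℝ)..1, Real.exp (h s)

/-- `γ` is a warping function in `Γ₁`, with (continuous) derivative `γ′` on `[0,1]`
bounded by `0 < m ≤ γ′ ≤ M`. -/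
def IsWarping (γ γ' : ℝ → ℝ) (m M : ℝ) : Prop :=
  γ 0 = 0 ∧ γ 1 = 1 ∧ Set.MapsTo γ (Set.Icc 0 1) (Set.Icc 0 1) ∧
  (∀ t ∈ Set.Icc (0:ℝ) 1, HasDerivWithinAt γ (γ' t) (Set.Icc 0 1) t) ∧
  ContinuousOn γ' (Set.Icc 0 1) ∧ 0 < m ∧
  ∀ t ∈ Set.Icc (0:ℝ) 1, m ≤ γ' t ∧ γ' t ≤ M

/-!
The chain rule writes `(γ₁ ∘ γ₂)′` as the product `(γ₁′ ∘ γ₂) · γ₂′`, and `clr` turns products into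
sums. The function `clr γ₁′ ∘ γ₂` differs from `log ∘ γ₁′ ∘ γ₂` by a constant, so subtracting its
mean over `[0,1]` yields `clr (γ₁′ ∘ γ₂)`.
-/

section clr

variable {f g φ : ℝ → ℝ} {t : ℝ}

theorem clr_congr (hfg : EqOn f g (Icc 0 1)) (ht : t ∈ Icc (0 : ℝ) 1) : clr f t = clr g t := by
  have integral_eq : ∫ s in (0 : ℝ)..1, Real.log (f s) = ∫ s in (0 : ℝ)..1, Real.log (g s) :=
    intervalIntegral.integral_congr fun s hs =>
      congrArg Real.log (hfg (uIcc_of_le (zero_le_one' ℝ) ▸ hs))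
  rw [clr, clr, hfg ht, integral_eq]

theorem clr_mul (hf : ∀ s ∈ Icc (0 : ℝ) 1, f s ≠ 0) (hg : ∀ s ∈ Icc (0 : ℝ) 1, g s ≠ 0)
    (hf_int : IntervalIntegrable (fun s => Real.log (f s)) volume 0 1)
    (hg_int : IntervalIntegrable (fun s => Real.log (g s)) volume 0 1)
    (ht : t ∈ Icc (0 : ℝ) 1) :
    clr (fun s => f s * g s) t = clr f t + clr g t := by
  have log_mul_eq : ∀ s ∈ Icc (0 : ℝ) 1,
      Real.log (f s * g s) = Real.log (f s) + Real.log (g s) :=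
    fun s hs => Real.log_mul (hf s hs) (hg s hs)
  have integral_eq : ∫ s in (0 : ℝ)..1, Real.log (f s * g s) =
      (∫ s in (0 : ℝ)..1, Real.log (f s)) + ∫ s in (0 : ℝ)..1, Real.log (g s) := by
    rw [← intervalIntegral.integral_add hf_int hg_int]
    exact intervalIntegral.integral_congr fun s hs =>
      log_mul_eq s (uIcc_of_le (zero_le_one' ℝ) ▸ hs)
  rw [clr, clr, clr, log_mul_eq t ht, integral_eq]
  ring

theorem clr_comp_right_eq_sub_integral
    (hg_int : IntervalIntegrable (fun s => Real.log (g (φ s))) volume 0 1) (t : ℝ) :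
    clr (fun s => g (φ s)) t = clr g (φ t) - ∫ s in (0 : ℝ)..1, clr g (φ s) := by
  have integral_eq : ∫ s in (0 : ℝ)..1, clr g (φ s) =
      (∫ s in (0 : ℝ)..1, Real.log (g (φ s))) - ∫ s in (0 : ℝ)..1, Real.log (g s) := by
    simp only [clr]
    rw [intervalIntegral.integral_sub hg_int intervalIntegrable_const,
      intervalIntegral.integral_const, sub_zero, one_smul]
  rw [integral_eq, clr, clr]
  ring

end clr

namespace IsWarping

variable {γ γ' φ : ℝ → ℝ} {m M : ℝ}

theorem mapsTo (h : IsWarping γ γ' m M) : MapsTo γ (Icc 0 1) (Icc 0 1) :=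
  h.2.2.1

theorem hasDerivWithinAt (h : IsWarping γ γ' m M) :
    ∀ t ∈ Icc (0 : ℝ) 1, HasDerivWithinAt γ (γ' t) (Icc 0 1) t :=
  h.2.2.2.1

theorem hasDerivWithinAt_comp {γ₁ γ₁' γ₂ γ₂' : ℝ → ℝ} {m₁ M₁ m₂ M₂ : ℝ}
    (h₁ : IsWarping γ₁ γ₁' m₁ M₁) (h₂ : IsWarping γ₂ γ₂' m₂ M₂) :
    ∀ t ∈ Icc (0 : ℝ) 1, HasDerivWithinAt (γ₁ ∘ γ₂) (γ₁' (γ₂ t) * γ₂' t) (Icc 0 1) t :=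
  fun t ht =>
    (h₁.hasDerivWithinAt _ (h₂.mapsTo ht)).comp t (h₂.hasDerivWithinAt t ht) h₂.mapsTo

theorem continuousOn (h : IsWarping γ γ' m M) : ContinuousOn γ (Icc 0 1) :=
  HasDerivWithinAt.continuousOn h.hasDerivWithinAt

theorem continuousOn_deriv (h : IsWarping γ γ' m M) : ContinuousOn γ' (Icc 0 1) :=
  h.2.2.2.2.1

theorem deriv_ne_zero (h : IsWarping γ γ' m M) : ∀ t ∈ Icc (0 : ℝ) 1, γ' t ≠ 0 := by
  obtain ⟨-, -, -, -, -, hm, hbounds⟩ := h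
  exact fun t ht => (hm.trans_le (hbounds t ht).1).ne'

theorem intervalIntegrable_log_deriv_comp (h : IsWarping γ γ' m M)
    (hφ : ContinuousOn φ (Icc 0 1)) (hφ_maps : MapsTo φ (Icc 0 1) (Icc 0 1)) :
    IntervalIntegrable (fun s => Real.log (γ' (φ s))) volume 0 1 :=
  ContinuousOn.intervalIntegrable_of_Icc zero_le_one <|
    (h.continuousOn_deriv.comp hφ hφ_maps).log fun s hs => h.deriv_ne_zero (φ s) (hφ_maps hs)

theorem intervalIntegrable_log_deriv (h : IsWarping γ γ' m M) :
    IntervalIntegrable (fun s => Real.log (γ' s)) volume 0 1 :=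
  h.intervalIntegrable_log_deriv_comp continuousOn_id (mapsTo_id _)

end IsWarping

theorem clr_comp_general {γ₁ γ₁' γ₂ γ₂' γ' : ℝ → ℝ}
    (hγ₁ : ∀ t ∈ Icc (0 : ℝ) 1, HasDerivWithinAt γ₁ (γ₁' t) (Icc 0 1) t)
    (hγ₂ : ∀ t ∈ Icc (0 : ℝ) 1, HasDerivWithinAt γ₂ (γ₂' t) (Icc 0 1) t)
    (hγ : ∀ t ∈ Icc (0 : ℝ) 1, HasDerivWithinAt (γ₁ ∘ γ₂) (γ' t) (Icc 0 1) t)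
    (hmaps : MapsTo γ₂ (Icc 0 1) (Icc 0 1))
    (hγ₁_ne : ∀ t ∈ Icc (0 : ℝ) 1, γ₁' (γ₂ t) ≠ 0) (hγ₂_ne : ∀ t ∈ Icc (0 : ℝ) 1, γ₂' t ≠ 0)
    (hγ₁_int : IntervalIntegrable (fun s => Real.log (γ₁' (γ₂ s))) volume 0 1)
    (hγ₂_int : IntervalIntegrable (fun s => Real.log (γ₂' s)) volume 0 1) :
    ∀ t ∈ Icc (0 : ℝ) 1,
      clr γ' t = clr γ₁' (γ₂ t) + clr γ₂' t - ∫ s in (0 : ℝ)..1, clr γ₁' (γ₂ s) := by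
  intro t ht
  have chain_rule : EqOn γ' (fun s => γ₁' (γ₂ s) * γ₂' s) (Icc 0 1) := fun s hs =>
    (uniqueDiffOn_Icc_zero_one s hs).eq_deriv _ (hγ s hs)
      ((hγ₁ _ (hmaps hs)).comp s (hγ₂ s hs) hmaps)
  calc clr γ' t = clr (fun s => γ₁' (γ₂ s) * γ₂' s) t := clr_congr chain_rule ht
    _ = clr (fun s => γ₁' (γ₂ s)) t + clr γ₂' t :=
      clr_mul hγ₁_ne hγ₂_ne hγ₁_int hγ₂_int ht
    _ = clr γ₁' (γ₂ t) + clr γ₂' t - ∫ s in (0 : ℝ)..1, clr γ₁' (γ₂ s) := by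
      rw [clr_comp_right_eq_sub_integral hγ₁_int, sub_add_eq_add_sub]

/-- for warping functions `γ₁, γ₂ ∈ Γ₁`, the CLR transform of their
composition (whose derivative is `t ↦ γ₁′(γ₂ t)·γ₂′(t)`) satisfies
`ψ_B(γ₁ ∘ γ₂)(t) = ψ_B(γ₁)(γ₂ t) + ψ_B(γ₂)(t) − ∫₀¹ ψ_B(γ₁)(γ₂ s) ds`
for all `t ∈ [0,1]`. -/
theorem clr_comp
    (γ₁ γ₁' γ₂ γ₂' : ℝ → ℝ) (m₁ M₁ m₂ M₂ : ℝ)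
    (h₁ : IsWarping γ₁ γ₁' m₁ M₁) (h₂ : IsWarping γ₂ γ₂' m₂ M₂) :
    ∀ t ∈ Set.Icc (0:ℝ) 1,
      clr (fun s => γ₁' (γ₂ s) * γ₂' s) t =
        clr γ₁' (γ₂ t) + clr γ₂' t - ∫ s in (0:ℝ)..1, clr γ₁' (γ₂ s) := by
  exact clr_comp_general h₁.hasDerivWithinAt h₂.hasDerivWithinAt (h₁.hasDerivWithinAt_comp h₂)
    h₂.mapsTo (fun s hs => h₁.deriv_ne_zero _ (h₂.mapsTo hs)) h₂.deriv_ne_zero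
    (h₁.intervalIntegrable_log_deriv_comp h₂.continuousOn h₂.mapsTo) h₂.intervalIntegrable_log_deriv
end

section
/- (Centering of the orbit.) Let γ₁, …, γₙ ∈ Γ₁ be warping functions and define the CLR mean warping γ̄ = ψ_B⁻¹((1/n)·Σᵢ₌₁ⁿ ψ_B(γᵢ)). Then the centered warpings γᵢ ∘ γ̄⁻¹ satisfy (1/n)·Σᵢ₌₁ⁿ ψ_B(γᵢ ∘ γ̄⁻¹)(t) = 0 for all t ∈ [0,1]; that is, the CLR mean of {γᵢ ∘ γ̄⁻¹} is the identity warping γ_id(t) = t. -/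
open Set MeasureTheory

/-!
Averaging CLR transforms amounts to taking a geometric mean of densities:
`∑ i, w i * ψ_B(γ i)` is the CLR transform of `G = ∏ i, (γ i)' ^ w i`, so the mean warping `γ̄` is
the normalized primitive of `G`. The weights sum to `1`, so precomposing every `γ i` with `δ`
replaces `G` by `(G ∘ δ) * δ'`. If `γ̄ ∘ δ = id`, the chain rule says that this new geometric mean
is constant, and the CLR transform of a constant vanishes.
-/

/-- The pointwise weighted geometric mean `t ↦ ∏ i ∈ s, g i t ^ w i` of a finite family of
densities. The weights are arbitrary reals, not assumed nonnegative or normalized. -/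
noncomputable def geomMean {ι X : Type*} (s : Finset ι) (w : ι → ℝ) (g : ι → X → ℝ) (t : X) : ℝ :=
  ∏ i ∈ s, g i t ^ w i

section GeomMean

variable {ι X : Type*} {s : Finset ι} {w : ι → ℝ} {g : ι → X → ℝ}

theorem geomMean_pos {t : X} (hg : ∀ i ∈ s, 0 < g i t) : 0 < geomMean s w g t :=
  Finset.prod_pos fun i hi => Real.rpow_pos_of_pos (hg i hi) _

theorem continuousOn_geomMean [TopologicalSpace X] {S : Set X}
    (hg : ∀ i ∈ s, ContinuousOn (g i) S) (hg_pos : ∀ i ∈ s, ∀ t ∈ S, 0 < g i t) :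
    ContinuousOn (geomMean s w g) S :=
  continuousOn_finsetProd s fun i hi =>
    (hg i hi).rpow_const fun t ht => Or.inl (hg_pos i hi t ht).ne'

theorem log_geomMean {t : X} (hg : ∀ i ∈ s, 0 < g i t) :
    Real.log (geomMean s w g t) = ∑ i ∈ s, w i * Real.log (g i t) := by
  rw [geomMean, Real.log_prod fun i hi => (Real.rpow_pos_of_pos (hg i hi) _).ne']
  exact Finset.sum_congr rfl fun i hi => Real.log_rpow (hg i hi) _

theorem geomMean_comp_mul {Y : Type*} (hw : ∑ i ∈ s, w i = 1) {δ : Y → X} {δ' : Y → ℝ} {t : Y}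
    (hg : ∀ i ∈ s, 0 < g i (δ t)) (hδ' : 0 < δ' t) :
    geomMean s w (fun i u => g i (δ u) * δ' u) t = geomMean s w g (δ t) * δ' t := by
  calc ∏ i ∈ s, (g i (δ t) * δ' t) ^ w i
      = ∏ i ∈ s, g i (δ t) ^ w i * δ' t ^ w i :=
        Finset.prod_congr rfl fun i hi => Real.mul_rpow (hg i hi).le hδ'.le
    _ = geomMean s w g (δ t) * δ' t := by
        rw [Finset.prod_mul_distrib, ← Real.rpow_sum_of_pos hδ', hw, Real.rpow_one, geomMean]

end GeomMean

theorem clr_eq_zero_of_eqOn_const {g : ℝ → ℝ} {c : ℝ} (hg : EqOn g (fun _ => c) (Icc 0 1))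
    {t : ℝ} (ht : t ∈ Icc (0 : ℝ) 1) : clr g t = 0 := by
  have integral_log : ∫ u in (0 : ℝ)..1, Real.log (g u) = Real.log c := by
    rw [intervalIntegral.integral_congr (g := fun _ => Real.log c)]
    · simp
    · intro u hu
      rw [uIcc_of_le zero_le_one] at hu
      exact congrArg Real.log (hg hu)
  rw [clr, hg ht, integral_log, sub_self]

theorem sum_mul_clr_eq_clr_geomMean {ι : Type*} {s : Finset ι} (w : ι → ℝ) {g : ι → ℝ → ℝ}
    (hg_pos : ∀ i ∈ s, ∀ t ∈ Icc (0 : ℝ) 1, 0 < g i t)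
    (hg_int : ∀ i ∈ s, IntervalIntegrable (fun t => Real.log (g i t)) volume 0 1)
    {t : ℝ} (ht : t ∈ Icc (0 : ℝ) 1) :
    ∑ i ∈ s, w i * clr (g i) t = clr (geomMean s w g) t := by
  have integral_log : ∫ u in (0 : ℝ)..1, Real.log (geomMean s w g u) =
      ∑ i ∈ s, w i * ∫ u in (0 : ℝ)..1, Real.log (g i u) := by
    rw [intervalIntegral.integral_congr (g := fun u => ∑ i ∈ s, w i * Real.log (g i u)),
      intervalIntegral.integral_finsetSum fun i hi => (hg_int i hi).const_mul (w i)]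
    · simp only [intervalIntegral.integral_const_mul]
    · intro u hu
      rw [uIcc_of_le zero_le_one] at hu
      exact log_geomMean fun i hi => hg_pos i hi u hu
  simp only [clr, mul_sub, Finset.sum_sub_distrib, integral_log,
    log_geomMean fun i hi => hg_pos i hi t ht]

theorem psiInv_congr {h k : ℝ → ℝ} (hhk : EqOn h k (Icc 0 1)) {t : ℝ} (ht : t ∈ Icc (0 : ℝ) 1) :
    psiInv h t = psiInv k t := by
  have integral_exp : ∀ x ∈ Icc (0 : ℝ) 1,
      ∫ u in (0 : ℝ)..x, Real.exp (h u) = ∫ u in (0 : ℝ)..x, Real.exp (k u) := by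
    intro x hx
    refine intervalIntegral.integral_congr fun u hu => ?_
    rw [uIcc_of_le hx.1] at hu
    exact congrArg Real.exp (hhk ⟨hu.1, hu.2.trans hx.2⟩)
  rw [psiInv, psiInv, integral_exp t ht, integral_exp 1 (right_mem_Icc.2 zero_le_one)]

theorem psiInv_zero (t : ℝ) : psiInv (fun _ => 0) t = t := by
  simp [psiInv]

theorem psiInv_clr {g : ℝ → ℝ} (hg : ∀ t ∈ Icc (0 : ℝ) 1, 0 < g t) {t : ℝ}
    (ht : t ∈ Icc (0 : ℝ) 1) :
    psiInv (clr g) t = (∫ u in (0 : ℝ)..t, g u) / ∫ u in (0 : ℝ)..1, g u := by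
  set c := ∫ u in (0 : ℝ)..1, Real.log (g u)
  have integral_exp_clr : ∀ x ∈ Icc (0 : ℝ) 1,
      ∫ u in (0 : ℝ)..x, Real.exp (clr g u) = (∫ u in (0 : ℝ)..x, g u) / Real.exp c := by
    intro x hx
    rw [← intervalIntegral.integral_div]
    refine intervalIntegral.integral_congr fun u hu => ?_
    rw [uIcc_of_le hx.1] at hu
    simp only [clr, Real.exp_sub, Real.exp_log (hg u ⟨hu.1, hu.2.trans hx.2⟩), c]
  rw [psiInv, integral_exp_clr t ht, integral_exp_clr 1 (right_mem_Icc.2 zero_le_one),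
    div_div_div_cancel_right₀ (Real.exp_ne_zero c)]

theorem hasDerivWithinAt_integral_of_continuousOn_Icc {E : Type*} [NormedAddCommGroup E]
    [NormedSpace ℝ E] [CompleteSpace E] {f : ℝ → E} {a b x : ℝ} (hf : ContinuousOn f (Icc a b))
    (hx : x ∈ Icc a b) :
    HasDerivWithinAt (fun u => ∫ y in a..u, f y) (f x) (Icc a b) x := by
  have : Fact (x ∈ Icc a b) := ⟨hx⟩
  exact intervalIntegral.integral_hasDerivWithinAt_right
    ((hf.mono (Icc_subset_Icc_right hx.2)).intervalIntegrable_of_Icc hx.1)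
    (hf.stronglyMeasurableAtFilter_nhdsWithin measurableSet_Icc x) (hf x hx)

theorem integral_pos_of_continuousOn_Icc {f : ℝ → ℝ} {a b : ℝ} (hab : a < b)
    (hf : ContinuousOn f (Icc a b)) (hf_pos : ∀ x ∈ Icc a b, 0 < f x) : 0 < ∫ x in a..b, f x :=
  intervalIntegral.intervalIntegral_pos_of_pos_on (hf.intervalIntegrable_of_Icc hab.le)
    (fun x hx => hf_pos x (Ioo_subset_Icc_self hx)) hab

theorem comp_mul_deriv_eq_integral_of_psiInv_clr_comp {g δ δ' : ℝ → ℝ}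
    (hg : ContinuousOn g (Icc 0 1)) (hg_pos : ∀ t ∈ Icc (0 : ℝ) 1, 0 < g t)
    (hδ_maps : MapsTo δ (Icc 0 1) (Icc 0 1))
    (hδ_inv : ∀ t ∈ Icc (0 : ℝ) 1, psiInv (clr g) (δ t) = t)
    {t : ℝ} (ht : t ∈ Icc (0 : ℝ) 1) (hδ_deriv : HasDerivWithinAt δ (δ' t) (Icc 0 1) t) :
    g (δ t) * δ' t = ∫ u in (0 : ℝ)..1, g u := by
  set C := ∫ u in (0 : ℝ)..1, g u
  have C_pos : 0 < C := integral_pos_of_continuousOn_Icc zero_lt_one hg hg_pos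
  have primitive_comp : ∀ x ∈ Icc (0 : ℝ) 1, ∫ u in (0 : ℝ)..δ x, g u = x * C := fun x hx =>
    (div_eq_iff C_pos.ne').1 ((psiInv_clr hg_pos (hδ_maps hx)).symm.trans (hδ_inv x hx))
  have deriv_comp : HasDerivWithinAt (fun x => ∫ u in (0 : ℝ)..δ x, g u) (g (δ t) * δ' t)
      (Icc 0 1) t :=
    (hasDerivWithinAt_integral_of_continuousOn_Icc hg (hδ_maps ht)).comp t hδ_deriv hδ_maps
  have deriv_linear : HasDerivWithinAt (fun x => ∫ u in (0 : ℝ)..δ x, g u) C (Icc 0 1) t :=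
    (hasDerivAt_mul_const C).hasDerivWithinAt.congr primitive_comp (primitive_comp t ht)
  exact (uniqueDiffOn_Icc zero_lt_one t ht).eq_deriv _ deriv_comp deriv_linear

theorem continuousOn_of_comp_mul_eq_const {X Y 𝕜 : Type*} [TopologicalSpace X] [TopologicalSpace Y]
    [Field 𝕜] [TopologicalSpace 𝕜] [ContinuousMul 𝕜] [ContinuousInv₀ 𝕜] {S : Set X} {T : Set Y}
    {g : Y → 𝕜} {δ : X → Y} {δ' : X → 𝕜} {C : 𝕜} (hg : ContinuousOn g T)
    (hg_ne : ∀ y ∈ T, g y ≠ 0) (hδ : ContinuousOn δ S) (hδ_maps : MapsTo δ S T)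
    (hC : ∀ x ∈ S, g (δ x) * δ' x = C) : ContinuousOn δ' S :=
  (continuousOn_const.div (hg.comp hδ hδ_maps) fun _ hx => hg_ne _ (hδ_maps hx)).congr
    fun x hx => eq_div_of_mul_eq (hg_ne _ (hδ_maps hx)) ((mul_comm _ _).trans (hC x hx))

section Centering

variable {ι : Type*} {s : Finset ι} {w : ι → ℝ} {g : ι → ℝ → ℝ} {δ δ' : ℝ → ℝ}

theorem eqOn_sum_mul_clr_clr_geomMean (hg : ∀ i ∈ s, ContinuousOn (g i) (Icc 0 1))
    (hg_pos : ∀ i ∈ s, ∀ t ∈ Icc (0 : ℝ) 1, 0 < g i t) :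
    EqOn (fun t => ∑ i ∈ s, w i * clr (g i) t) (clr (geomMean s w g)) (Icc 0 1) :=
  fun _ => sum_mul_clr_eq_clr_geomMean w hg_pos fun i hi =>
    ((hg i hi).log fun u hu => (hg_pos i hi u hu).ne').intervalIntegrable_of_Icc zero_le_one

theorem sum_mul_clr_comp_mul_eq_zero (hw : ∑ i ∈ s, w i = 1)
    (hg : ∀ i ∈ s, ContinuousOn (g i) (Icc 0 1))
    (hg_pos : ∀ i ∈ s, ∀ t ∈ Icc (0 : ℝ) 1, 0 < g i t) (hδ : ContinuousOn δ (Icc 0 1))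
    (hδ_maps : MapsTo δ (Icc 0 1) (Icc 0 1)) {C : ℝ} (hC_pos : 0 < C)
    (hC : ∀ t ∈ Icc (0 : ℝ) 1, geomMean s w g (δ t) * δ' t = C) {t : ℝ}
    (ht : t ∈ Icc (0 : ℝ) 1) : ∑ i ∈ s, w i * clr (fun u => g i (δ u) * δ' u) t = 0 := by
  have mean_pos : ∀ u ∈ Icc (0 : ℝ) 1, 0 < geomMean s w g u :=
    fun u hu => geomMean_pos fun i hi => hg_pos i hi u hu
  have δ'_pos : ∀ u ∈ Icc (0 : ℝ) 1, 0 < δ' u := fun u hu =>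
    pos_of_mul_pos_right (hC_pos.trans_eq (hC u hu).symm) (mean_pos _ (hδ_maps hu)).le
  have δ'_cont : ContinuousOn δ' (Icc 0 1) :=
    continuousOn_of_comp_mul_eq_const (continuousOn_geomMean hg hg_pos)
      (fun u hu => (mean_pos u hu).ne') hδ hδ_maps hC
  have mean_const : EqOn (geomMean s w fun i u => g i (δ u) * δ' u) (fun _ => C) (Icc 0 1) :=
    fun u hu => (geomMean_comp_mul hw (fun i hi => hg_pos i hi _ (hδ_maps hu)) (δ'_pos u hu)).trans
      (hC u hu)
  calc ∑ i ∈ s, w i * clr (fun u => g i (δ u) * δ' u) t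
      = clr (geomMean s w fun i u => g i (δ u) * δ' u) t :=
        eqOn_sum_mul_clr_clr_geomMean
          (fun i hi => ((hg i hi).comp hδ hδ_maps).mul δ'_cont)
          (fun i hi u hu => mul_pos (hg_pos i hi _ (hδ_maps hu)) (δ'_pos u hu)) ht
    _ = 0 := clr_eq_zero_of_eqOn_const mean_const ht

theorem centering_of_orbit_general (hw : ∑ i ∈ s, w i = 1)
    (hg : ∀ i ∈ s, ContinuousOn (g i) (Icc 0 1))
    (hg_pos : ∀ i ∈ s, ∀ t ∈ Icc (0 : ℝ) 1, 0 < g i t)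
    (hδ_maps : MapsTo δ (Icc 0 1) (Icc 0 1))
    (hδ_deriv : ∀ t ∈ Icc (0 : ℝ) 1, HasDerivWithinAt δ (δ' t) (Icc 0 1) t)
    (hδ_inv : ∀ t ∈ Icc (0 : ℝ) 1, psiInv (fun u => ∑ i ∈ s, w i * clr (g i) u) (δ t) = t) :
    (∀ t ∈ Icc (0 : ℝ) 1, ∑ i ∈ s, w i * clr (fun u => g i (δ u) * δ' u) t = 0) ∧
    ∀ t ∈ Icc (0 : ℝ) 1,
      psiInv (fun u => ∑ i ∈ s, w i * clr (fun v => g i (δ v) * δ' v) u) t = t := by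
  have mean_pos : ∀ t ∈ Icc (0 : ℝ) 1, 0 < geomMean s w g t :=
    fun t ht => geomMean_pos fun i hi => hg_pos i hi t ht
  have mean_cont : ContinuousOn (geomMean s w g) (Icc 0 1) := continuousOn_geomMean hg hg_pos
  have psiInv_clr_mean : ∀ t ∈ Icc (0 : ℝ) 1, psiInv (clr (geomMean s w g)) (δ t) = t :=
    fun t ht => (psiInv_congr (eqOn_sum_mul_clr_clr_geomMean hg hg_pos)
      (hδ_maps ht)).symm.trans (hδ_inv t ht)
  have centered : ∀ t ∈ Icc (0 : ℝ) 1, ∑ i ∈ s, w i * clr (fun u => g i (δ u) * δ' u) t = 0 :=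
    fun t => sum_mul_clr_comp_mul_eq_zero hw hg hg_pos
      (fun u hu => (hδ_deriv u hu).continuousWithinAt) hδ_maps
      (integral_pos_of_continuousOn_Icc zero_lt_one mean_cont mean_pos)
      fun u hu => comp_mul_deriv_eq_integral_of_psiInv_clr_comp mean_cont mean_pos hδ_maps
        psiInv_clr_mean hu (hδ_deriv u hu)
  exact ⟨centered, fun t ht => (psiInv_congr centered ht).trans (psiInv_zero t)⟩

end Centering

theorem IsWarping.continuousOn_deriv_s11 {γ γ' : ℝ → ℝ} {m M : ℝ} (hγ : IsWarping γ γ' m M) :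
    ContinuousOn γ' (Icc 0 1) :=
  hγ.2.2.2.2.1

theorem IsWarping.deriv_pos {γ γ' : ℝ → ℝ} {m M : ℝ} (hγ : IsWarping γ γ' m M) {t : ℝ}
    (ht : t ∈ Icc (0 : ℝ) 1) : 0 < γ' t :=
  let ⟨_, _, _, _, _, hm, hbounds⟩ := hγ
  hm.trans_le (hbounds t ht).1

/-- centering of the orbit: let `γ₁, …, γₙ ∈ Γ₁` and let
`γ̄ = ψ_B⁻¹((1/n)·Σᵢ ψ_B(γᵢ))` be the CLR mean warping, with inverse `δ = γ̄⁻¹ ∈ Γ₁`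
(with derivative `δ′`).  Then the centered warpings `γᵢ ∘ γ̄⁻¹` (with derivatives
`t ↦ γᵢ′(δ t)·δ′(t)`) satisfy `(1/n)·Σᵢ ψ_B(γᵢ ∘ γ̄⁻¹)(t) = 0` for all `t ∈ [0,1]`;
that is, their CLR mean `ψ_B⁻¹((1/n)·Σᵢ ψ_B(γᵢ ∘ γ̄⁻¹))` is the identity warping. -/
theorem centering_of_orbit
    (n : ℕ) (hn : 0 < n)
    (γ : Fin n → ℝ → ℝ) (γ' : Fin n → ℝ → ℝ) (m M : Fin n → ℝ)
    (hγ : ∀ i, IsWarping (γ i) (γ' i) (m i) (M i))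
    (δ δ' : ℝ → ℝ) (mδ Mδ : ℝ)
    (hδ : IsWarping δ δ' mδ Mδ)
    (hinv₁ : ∀ t ∈ Set.Icc (0:ℝ) 1,
      δ (psiInv (fun s => (1 / (n:ℝ)) * ∑ i : Fin n, clr (γ' i) s) t) = t)
    (hinv₂ : ∀ t ∈ Set.Icc (0:ℝ) 1,
      psiInv (fun s => (1 / (n:ℝ)) * ∑ i : Fin n, clr (γ' i) s) (δ t) = t) :
    (∀ t ∈ Set.Icc (0:ℝ) 1,
      (1 / (n:ℝ)) * ∑ i : Fin n, clr (fun s => γ' i (δ s) * δ' s) t = 0) ∧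
    ∀ t ∈ Set.Icc (0:ℝ) 1,
      psiInv (fun u => (1 / (n:ℝ)) * ∑ i : Fin n,
        clr (fun s => γ' i (δ s) * δ' s) u) t = t := by
  obtain ⟨-, -, hδ_maps, hδ_deriv, -⟩ := hδ
  have hw : ∑ _i : Fin n, 1 / (n : ℝ) = 1 := by simp [hn.ne']
  simp only [Finset.mul_sum] at hinv₂ ⊢
  exact centering_of_orbit_general hw (fun i _ => (hγ i).continuousOn_deriv_s11)
    (fun i _ _ ht => (hγ i).deriv_pos ht) hδ_maps hδ_deriv hinv₂
end
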